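/- Let A be a nonempty closed convex subset of ℝ^k, let λ > 0, K ≥ 0 and T > 0, and let G : [0,T] × ℝ^k → ℝ be such that for every t ∈ [0,T] the function G(t, ·) is differentiable and satisfies the λ-gap inequality on A. Let â : [0,T] → A be such that â(t) minimizes G(t, ·) over A for each t. If ‖∇ₐG(t, a) − ∇ₐG(s, a)‖ ≤ K(1 + ‖a‖)·|t − s|^{1/2} for all s, t ∈ [0,T] and all a ∈ A, then ‖â(t) − â(s)‖ ≤ (2λ)⁻¹ K (1 + ‖â(s)‖)·|t − s|^{1/2} for all s, t ∈ [0,T]. -/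

import Mathlib

open scoped RealInnerProductSpace

/-!
Let `x` minimize `f` and `y` minimize `g` over the convex set `A`, where `g` satisfies the gap
inequality. Adding the gap inequalities of `g` based at `x` and at `y` cancels the values of `g`,
and the first-order condition at `y` leaves `2λ‖y - x‖² ≤ -g'(x)(y - x)`. The first-order
condition `0 ≤ f'(x)(y - x)` bounds the right-hand side by `‖g'(x) - f'(x)‖ ‖y - x‖`. Hence the
minimizers inherit the time regularity of the derivatives at the single point `x`.
-/

section NormedSpace

variable {E : Type*} [NormedAddCommGroup E] [NormedSpace ℝ E]
  {A : Set E} {f g : E → ℝ} {g' : E → E →L[ℝ] ℝ} {φ : E →L[ℝ] ℝ} {lam : ℝ} {x y : E}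

/-- The `lam`-gap inequality on `A`: `f` lies above each of its tangents at points of `A` by at
least `lam` times the squared distance. The derivative is a parameter `f'`, which covers functions
that are differentiable only within `A`. -/
def GapInequalityOn (lam : ℝ) (A : Set E) (f : E → ℝ) (f' : E → E →L[ℝ] ℝ) : Prop :=
  ∀ ⦃a⦄, a ∈ A → ∀ ⦃b⦄, b ∈ A → lam * ‖b - a‖ ^ 2 ≤ f b - f a - f' a (b - a)

theorem hasFDerivWithinAt_nonneg_of_isMinOn (hA : StarConvex ℝ x A) (hmin : IsMinOn f A x)
    (hφ : HasFDerivWithinAt f φ A x) (hy : y ∈ A) : 0 ≤ φ (y - x) :=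
  hmin.localize.hasFDerivWithinAt_nonneg hφ
    (sub_mem_posTangentConeAt_of_segment_subset (hA.segment_subset hy))

namespace GapInequalityOn

theorem mul_sq_norm_sub_le_of_isMinOn (hg : GapInequalityOn lam A g g') (hA : StarConvex ℝ x A)
    (hx : x ∈ A) (hmin : IsMinOn g A x) (hg' : HasFDerivWithinAt g (g' x) A x) (hy : y ∈ A) :
    lam * ‖y - x‖ ^ 2 ≤ g y - g x :=
  (hg hx hy).trans <|
    sub_le_self _ (hasFDerivWithinAt_nonneg_of_isMinOn hA hmin hg' hy)

theorem norm_sub_le_of_isMinOn (hg : GapInequalityOn lam A g g') (hlam : 0 < lam)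
    (hA : Convex ℝ A) (hx : x ∈ A) (hy : y ∈ A)
    (hfmin : IsMinOn f A x) (hgmin : IsMinOn g A y)
    (hφ : HasFDerivWithinAt f φ A x) (hg' : HasFDerivWithinAt g (g' y) A y) :
    ‖y - x‖ ≤ (2 * lam)⁻¹ * ‖g' x - φ‖ := by
  have hgap : lam * ‖y - x‖ ^ 2 ≤ g y - g x - g' x (y - x) := hg hx hy
  have hgrowth : lam * ‖y - x‖ ^ 2 ≤ g x - g y := by
    simpa only [norm_sub_rev x y] using
      hg.mul_sq_norm_sub_le_of_isMinOn (hA.starConvex hy) hy hgmin hg' hx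
  have hfoc : 0 ≤ φ (y - x) := hasFDerivWithinAt_nonneg_of_isMinOn (hA.starConvex hx) hfmin hφ hy
  have hsq : 2 * lam * ‖y - x‖ * ‖y - x‖ ≤ ‖g' x - φ‖ * ‖y - x‖ :=
    calc
      2 * lam * ‖y - x‖ * ‖y - x‖ ≤ -(g' x - φ) (y - x) := by
        rw [sub_apply]
        linarith
      _ ≤ ‖(g' x - φ) (y - x)‖ := neg_le_abs _
      _ ≤ ‖g' x - φ‖ * ‖y - x‖ := (g' x - φ).le_opNorm _
  rw [le_inv_mul_iff₀ (by positivity)]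
  rcases (norm_nonneg (y - x)).eq_or_lt with hzero | hpos
  · simp [← hzero]
  · exact le_of_mul_le_mul_right hsq hpos

end GapInequalityOn

theorem holder_time_regularity_of_constrained_minimizer_general {ι : Type*}
    {I : Set ι} {K : ℝ} {ω : ι → ι → ℝ} {G : ι → E → ℝ} {G' : ι → E → E →L[ℝ] ℝ} {ahat : ι → E}
    (hA : Convex ℝ A) (hlam : 0 < lam)
    (hG' : ∀ t ∈ I, ∀ a ∈ A, HasFDerivWithinAt (G t) (G' t a) A a)
    (hGap : ∀ t ∈ I, GapInequalityOn lam A (G t) (G' t))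
    (hmem : ∀ t ∈ I, ahat t ∈ A) (hmin : ∀ t ∈ I, IsMinOn (G t) A (ahat t))
    (hHolder : ∀ s ∈ I, ∀ t ∈ I, ∀ a ∈ A, ‖G' t a - G' s a‖ ≤ K * (1 + ‖a‖) * ω s t) :
    ∀ s ∈ I, ∀ t ∈ I,
      ‖ahat t - ahat s‖ ≤ (2 * lam)⁻¹ * K * (1 + ‖ahat s‖) * ω s t := by
  intro s hs t ht
  calc
    ‖ahat t - ahat s‖ ≤ (2 * lam)⁻¹ * ‖G' t (ahat s) - G' s (ahat s)‖ :=
      (hGap t ht).norm_sub_le_of_isMinOn hlam hA (hmem s hs) (hmem t ht) (hmin s hs) (hmin t ht)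
        (hG' s hs _ (hmem s hs)) (hG' t ht _ (hmem t ht))
    _ ≤ (2 * lam)⁻¹ * (K * (1 + ‖ahat s‖) * ω s t) := by
      gcongr
      exact hHolder s hs t ht _ (hmem s hs)
    _ = (2 * lam)⁻¹ * K * (1 + ‖ahat s‖) * ω s t := by ring

end NormedSpace

theorem holder_time_regularity_of_constrained_minimizer {k : ℕ}
    (A : Set (EuclideanSpace ℝ (Fin k)))
    (hA : A.Nonempty) (hAclosed : IsClosed A) (hAconv : Convex ℝ A)
    (lam K T : ℝ) (hlam : 0 < lam) (hK : 0 ≤ K) (hT : 0 < T)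
    (G : ℝ → EuclideanSpace ℝ (Fin k) → ℝ)
    (hdiff : ∀ t ∈ Set.Icc (0 : ℝ) T, Differentiable ℝ (G t))
    (hGap : ∀ t ∈ Set.Icc (0 : ℝ) T, ∀ a ∈ A, ∀ b ∈ A,
      lam * ‖b - a‖ ^ 2 ≤ G t b - G t a - ⟪gradient (G t) a, b - a⟫)
    (ahat : ℝ → EuclideanSpace ℝ (Fin k))
    (hmem : ∀ t ∈ Set.Icc (0 : ℝ) T, ahat t ∈ A)
    (hmin : ∀ t ∈ Set.Icc (0 : ℝ) T, ∀ a ∈ A, G t (ahat t) ≤ G t a)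
    (hHolder : ∀ s ∈ Set.Icc (0 : ℝ) T, ∀ t ∈ Set.Icc (0 : ℝ) T, ∀ a ∈ A,
      ‖gradient (G t) a - gradient (G s) a‖ ≤ K * (1 + ‖a‖) * Real.sqrt |t - s|) :
    ∀ s ∈ Set.Icc (0 : ℝ) T, ∀ t ∈ Set.Icc (0 : ℝ) T,
      ‖ahat t - ahat s‖ ≤ (2 * lam)⁻¹ * K * (1 + ‖ahat s‖) * Real.sqrt |t - s| := by
  refine holder_time_regularity_of_constrained_minimizer_general
    (ω := fun s t ↦ √|t - s|) (G' := fun t a ↦ InnerProductSpace.toDual ℝ _ (gradient (G t) a))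
    hAconv hlam (fun t ht a _ ↦ (hdiff t ht a).hasGradientAt.hasFDerivAt.hasFDerivWithinAt)
    hGap hmem hmin fun s hs t ht a ha ↦ ?_
  simpa only [← map_sub, LinearIsometryEquiv.norm_map] using hHolder s hs t ht a ha
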